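/- arXiv:2504.16611 — 6 statements merged into one kernel-verified Lean document; each statement's English description precedes it below -/
import Mathlib

section
/- If a function f : (0,∞) → ℝ satisfies f(t) + 2·f(1/t) = (1 − t²)/(1 + t²) for every t > 0, then f(t) = (t² − 1)/(t² + 1) for every t > 0; in particular f(2024) = 4096575/4096577. -/
theorem stmt_0 (f : ℝ → ℝ)
    (h : ∀ t : ℝ, 0 < t → f t + 2 * f (1 / t) = (1 - t ^ 2) / (1 + t ^ 2)) :
    (∀ t : ℝ, 0 < t → f t = (t ^ 2 - 1) / (t ^ 2 + 1)) ∧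
      f 2024 = 4096575 / 4096577 := by
  have key : ∀ t : ℝ, 0 < t → f t = (t ^ 2 - 1) / (t ^ 2 + 1) := by
    intro t ht
    have h1 := h t ht
    have h2 := h (1 / t) (by positivity)
    rw [one_div_one_div] at h2
    have e1 : (1 - (1 / t) ^ 2) / (1 + (1 / t) ^ 2) = (t ^ 2 - 1) / (t ^ 2 + 1) := by
      have : t ≠ 0 := ht.ne'
      field_simp
    have e2 : (1 - t ^ 2) / (1 + t ^ 2) = -((t ^ 2 - 1) / (t ^ 2 + 1)) := by
      rw [← neg_div, add_comm, neg_sub]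
    rw [e1] at h2
    rw [e2] at h1
    linarith
  refine ⟨key, ?_⟩
  rw [key 2024 (by norm_num)]
  norm_num
end

section
/- Let X be a set, K a field, σ : X → X a bijection with σ ∘ σ ∘ σ = id, and a, b, c ∈ K with a³ + b³ + c³ − 3abc ≠ 0. Then for every function F : X → K there exists a unique function f : X → K satisfying a·f(x) + b·f(σ(x)) + c·f(σ(σ(x))) = F(x) for all x ∈ X. -/
theorem stmt_4 {X : Type*} {K : Type*} [Field K] (σ : X → X)
    (hbij : Function.Bijective σ) (hσ : ∀ x, σ (σ (σ x)) = x)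
    (a b c : K) (h : a ^ 3 + b ^ 3 + c ^ 3 - 3 * a * b * c ≠ 0) (F : X → K) :
    ∃! f : X → K, ∀ x, a * f x + b * f (σ x) + c * f (σ (σ x)) = F x := by
  refine ⟨fun x => (a ^ 3 + b ^ 3 + c ^ 3 - 3 * a * b * c)⁻¹ *
    ((a ^ 2 - b * c) * F x + (c ^ 2 - a * b) * F (σ x) + (b ^ 2 - a * c) * F (σ (σ x))), ?_, ?_⟩
  · intro x
    simp only [hσ]
    apply mul_left_cancel₀ h
    have e := mul_inv_cancel₀ h
    generalize (a ^ 3 + b ^ 3 + c ^ 3 - 3 * a * b * c)⁻¹ = d at e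
    linear_combination (a ^ 3 + b ^ 3 + c ^ 3 - 3 * a * b * c) * F x * e
  · intro g hg
    funext x
    have h1 := hg x
    have h2 := hg (σ x)
    have h3 := hg (σ (σ x))
    simp only [hσ] at h2 h3
    rw [eq_inv_mul_iff_mul_eq₀ h]
    linear_combination (a ^ 2 - b * c) * h1 + (c ^ 2 - a * b) * h2 + (b ^ 2 - a * c) * h3
end

section
/- For elements a, b, c, d, e, f of a commutative ring, the determinant of the 6×6 matrix with rows (a,b,c,d,e,f), (b,a,f,e,d,c), (c,e,a,f,b,d), (d,f,e,a,c,b), (f,d,b,c,a,e), (e,c,d,b,f,a) equals (a² − b² + bc − c² + bd + cd − d² − ae + e² − af − ef + f²)² · (a + b + c + d + e + f) · (a − b − c − d + e + f). -/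
set_option maxHeartbeats 4000000 in
set_option maxRecDepth 100000 in
theorem stmt_6 {R : Type*} [CommRing R] (a b c d e f : R) :
    (!![a, b, c, d, e, f;
        b, a, f, e, d, c;
        c, e, a, f, b, d;
        d, f, e, a, c, b;
        f, d, b, c, a, e;
        e, c, d, b, f, a] : Matrix (Fin 6) (Fin 6) R).det =
      (a ^ 2 - b ^ 2 + b * c - c ^ 2 + b * d + c * d - d ^ 2 - a * e + e ^ 2
          - a * f - e * f + f ^ 2) ^ 2 *
        (a + b + c + d + e + f) * (a - b - c - d + e + f) := by
  simp [Matrix.det_succ_row_zero, Fin.sum_univ_succ, Fin.succAbove, Matrix.submatrix]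
  ring
end

section
/- In the field of rational functions ℚ(t), the determinant of the 6×6 matrix with rows (1+t, 1−t, 1/t, 0, 0, 0), (t, 2−t, 0, 1/(1−t), 0, 0), (t, 0, 1+1/t, 0, 0, 1−1/t), (0, 1−t, 0, 1+1/(1−t), t/(t−1), 0), (0, 0, 0, 1/(1−t), 1+t/(t−1), 1−1/t), (0, 0, 1/t, 0, t/(t−1), 1+(t−1)/t) equals the constant −4. -/
/-- The generator `t` of the field ℚ(t) of rational functions over ℚ. -/
noncomputable def t : RatFunc ℚ := RatFunc.X

/-- The determinant identity in an arbitrary field, away from the poles. -/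
theorem det_aux {K : Type*} [Field K] (x : K) (h0 : x ≠ 0) (h1 : x - 1 ≠ 0) :
    (!![1 + x, 1 - x, 1 / x, 0, 0, 0;
        x, 2 - x, 0, 1 / (1 - x), 0, 0;
        x, 0, 1 + 1 / x, 0, 0, 1 - 1 / x;
        0, 1 - x, 0, 1 + 1 / (1 - x), x / (x - 1), 0;
        0, 0, 0, 1 / (1 - x), 1 + x / (x - 1), 1 - 1 / x;
        0, 0, 1 / x, 0, x / (x - 1), 1 + (x - 1) / x] :
      Matrix (Fin 6) (Fin 6) K).det = -4 := by
  have h2 : (1 - x) = -(x - 1) := by ring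
  have e1 : 1 / (1 - x) = -(1 / (x - 1)) := by rw [h2]; field_simp
  have e2 : x / (x - 1) = 1 + 1 / (x - 1) := by field_simp; ring
  have e3 : (x - 1) / x = 1 - 1 / x := by field_simp
  rw [e1, e2, e3]
  have hp : x * (1 / x) = 1 := by field_simp
  have hq : (x - 1) * (1 / (x - 1)) = 1 := by field_simp
  generalize 1 / x = p at *
  generalize 1 / (x - 1) = q at *
  have hp' : p = 1 / x := by field_simp; linear_combination hp
  have hq' : q = 1 / (x - 1) := by field_simp; linear_combination hq
  simp [Matrix.det_succ_row_zero, Fin.sum_univ_succ, Fin.succAbove, Matrix.submatrix]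
  rw [hp', hq']
  field_simp
  ring

theorem stmt_8 :
    (!![1 + t, 1 - t, 1 / t, 0, 0, 0;
        t, 2 - t, 0, 1 / (1 - t), 0, 0;
        t, 0, 1 + 1 / t, 0, 0, 1 - 1 / t;
        0, 1 - t, 0, 1 + 1 / (1 - t), t / (t - 1), 0;
        0, 0, 0, 1 / (1 - t), 1 + t / (t - 1), 1 - 1 / t;
        0, 0, 1 / t, 0, t / (t - 1), 1 + (t - 1) / t] :
      Matrix (Fin 6) (Fin 6) (RatFunc ℚ)).det = -4 := by
  refine det_aux t RatFunc.X_ne_zero ?_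
  intro h
  have h' : (RatFunc.X : RatFunc ℚ) = 1 := sub_eq_zero.mp h
  rw [← RatFunc.algebraMap_X, ← map_one (algebraMap (Polynomial ℚ) (RatFunc ℚ))] at h'
  have h3 := congrArg Polynomial.natDegree (RatFunc.algebraMap_injective ℚ h')
  simp at h3
end

section
/- For elements b₁, …, b₈ of a commutative ring, the determinant of the 8×8 matrix with rows (b₁,b₂,b₃,b₄,b₅,b₆,b₇,b₈), (b₂,b₁,b₄,b₃,b₆,b₅,b₈,b₇), (b₄,b₃,b₁,b₂,b₇,b₈,b₆,b₅), (b₃,b₄,b₂,b₁,b₈,b₇,b₅,b₆), (b₆,b₅,b₈,b₇,b₁,b₂,b₃,b₄), (b₅,b₆,b₇,b₈,b₂,b₁,b₄,b₃), (b₈,b₇,b₆,b₅,b₃,b₄,b₁,b₂), (b₇,b₈,b₅,b₆,b₄,b₃,b₂,b₁) equals ((b₁−b₂)² + (b₃−b₄)² + (b₅−b₆)² + (b₇−b₈)²) · ((b₁−b₂)² − (b₃−b₄)² − (b₅−b₆)² + (b₇−b₈)²) · (b₁+b₂+b₃+b₄+b₅+b₆+b₇+b₈) · (b₁+b₂+b₃+b₄−b₅−b₆−b₇−b₈)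 · (b₁+b₂−b₃−b₄+b₅+b₆−b₇−b₈) · (b₁+b₂−b₃−b₄−b₅−b₆+b₇+b₈). -/
open Matrix in
/-- Determinant of a symmetric two-by-two block circulant. -/
theorem det_block_circulant {R : Type*} [CommRing R] (A B : Matrix (Fin 4) (Fin 4) R) :
    (fromBlocks A B B A).det = (A + B).det * (A - B).det := by
  have h : fromBlocks 1 0 (-1) 1 * fromBlocks A B B A * fromBlocks 1 0 1 1
      = fromBlocks (A + B) B 0 (A - B) := by
    simp only [fromBlocks_multiply]
    congr 1 <;> simp <;> abel
  have h2 := congrArg Matrix.det h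
  simpa [det_mul, det_fromBlocks_zero₁₂, det_fromBlocks_zero₂₁] using h2

/-- Odd positions first, then even positions. -/
def interleave : Fin 4 ⊕ Fin 4 ≃ Fin 8 where
  toFun := Sum.elim ![0, 2, 4, 6] ![1, 3, 5, 7]
  invFun := ![.inl 0, .inr 0, .inl 1, .inr 1, .inl 2, .inr 2, .inl 3, .inr 3]
  left_inv := by decide
  right_inv := by decide

theorem stmt_10 {R : Type*} [CommRing R] (b₁ b₂ b₃ b₄ b₅ b₆ b₇ b₈ : R) :
    (!![b₁, b₂, b₃, b₄, b₅, b₆, b₇, b₈;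
        b₂, b₁, b₄, b₃, b₆, b₅, b₈, b₇;
        b₄, b₃, b₁, b₂, b₇, b₈, b₆, b₅;
        b₃, b₄, b₂, b₁, b₈, b₇, b₅, b₆;
        b₆, b₅, b₈, b₇, b₁, b₂, b₃, b₄;
        b₅, b₆, b₇, b₈, b₂, b₁, b₄, b₃;
        b₈, b₇, b₆, b₅, b₃, b₄, b₁, b₂;
        b₇, b₈, b₅, b₆, b₄, b₃, b₂, b₁] : Matrix (Fin 8) (Fin 8) R).det =
      ((b₁ - b₂) ^ 2 + (b₃ - b₄) ^ 2 + (b₅ - b₆) ^ 2 + (b₇ - b₈) ^ 2) *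
        ((b₁ - b₂) ^ 2 - (b₃ - b₄) ^ 2 - (b₅ - b₆) ^ 2 + (b₇ - b₈) ^ 2) *
        (b₁ + b₂ + b₃ + b₄ + b₅ + b₆ + b₇ + b₈) *
        (b₁ + b₂ + b₃ + b₄ - b₅ - b₆ - b₇ - b₈) *
        (b₁ + b₂ - b₃ - b₄ + b₅ + b₆ - b₇ - b₈) *
        (b₁ + b₂ - b₃ - b₄ - b₅ - b₆ + b₇ + b₈) := by
  rw [← Matrix.det_submatrix_equiv_self interleave]
  have h : ∀ M : Matrix (Fin 8) (Fin 8) R, M = !![b₁, b₂, b₃, b₄, b₅, b₆, b₇, b₈;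
        b₂, b₁, b₄, b₃, b₆, b₅, b₈, b₇;
        b₄, b₃, b₁, b₂, b₇, b₈, b₆, b₅;
        b₃, b₄, b₂, b₁, b₈, b₇, b₅, b₆;
        b₆, b₅, b₈, b₇, b₁, b₂, b₃, b₄;
        b₅, b₆, b₇, b₈, b₂, b₁, b₄, b₃;
        b₈, b₇, b₆, b₅, b₃, b₄, b₁, b₂;
        b₇, b₈, b₅, b₆, b₄, b₃, b₂, b₁] → M.submatrix interleave interleave =
      Matrix.fromBlocks
        !![b₁, b₃, b₅, b₇; b₄, b₁, b₇, b₆; b₆, b₈, b₁, b₃; b₈, b₆, b₃, b₁]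
        !![b₂, b₄, b₆, b₈; b₃, b₂, b₈, b₅; b₅, b₇, b₂, b₄; b₇, b₅, b₄, b₂]
        !![b₂, b₄, b₆, b₈; b₃, b₂, b₈, b₅; b₅, b₇, b₂, b₄; b₇, b₅, b₄, b₂]
        !![b₁, b₃, b₅, b₇; b₄, b₁, b₇, b₆; b₆, b₈, b₁, b₃; b₈, b₆, b₃, b₁] := by
    rintro M rfl
    ext i j
    rcases i with i | i <;> rcases j with j | j <;> fin_cases i <;> fin_cases j <;> rfl
  rw [h _ rfl, det_block_circulant]
  have hp : (!![b₁, b₃, b₅, b₇; b₄, b₁, b₇, b₆; b₆, b₈, b₁, b₃; b₈, b₆, b₃, b₁] +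
      !![b₂, b₄, b₆, b₈; b₃, b₂, b₈, b₅; b₅, b₇, b₂, b₄; b₇, b₅, b₄, b₂]).det =
      (b₁ + b₂ + b₃ + b₄ + b₅ + b₆ + b₇ + b₈) *
        (b₁ + b₂ + b₃ + b₄ - b₅ - b₆ - b₇ - b₈) *
        (b₁ + b₂ - b₃ - b₄ + b₅ + b₆ - b₇ - b₈) *
        (b₁ + b₂ - b₃ - b₄ - b₅ - b₆ + b₇ + b₈) := by
    simp [Matrix.det_succ_row_zero, Fin.sum_univ_succ, Fin.succAbove]
    ring
  have hm : (!![b₁, b₃, b₅, b₇; b₄, b₁, b₇, b₆; b₆, b₈, b₁, b₃; b₈, b₆, b₃, b₁] -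
      !![b₂, b₄, b₆, b₈; b₃, b₂, b₈, b₅; b₅, b₇, b₂, b₄; b₇, b₅, b₄, b₂]).det =
      ((b₁ - b₂) ^ 2 + (b₃ - b₄) ^ 2 + (b₅ - b₆) ^ 2 + (b₇ - b₈) ^ 2) *
        ((b₁ - b₂) ^ 2 - (b₃ - b₄) ^ 2 - (b₅ - b₆) ^ 2 + (b₇ - b₈) ^ 2) := by
    simp [Matrix.det_succ_row_zero, Fin.sum_univ_succ, Fin.succAbove]
    ring
  rw [hp, hm]
  simp only [mul_assoc, mul_comm, mul_left_comm]
end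

section
/- Let G be a finite group acting on a set X, let K be a field, and let a : G → K be such that the determinant of the |G| × |G| matrix whose (s,t) entry is a(s⁻¹t) (rows and columns indexed by the elements of G) is nonzero. Then for every function F : X → K there exists a unique function f : X → K satisfying Σ_{g ∈ G} a(g) · f(g • x) = F(x) for every x ∈ X. -/
theorem stmt_11 {G : Type*} [Group G] [Fintype G] [DecidableEq G]
    {X : Type*} [MulAction G X] {K : Type*} [Field K] (a : G → K)
    (hdet : (Matrix.of fun s t : G => a (s⁻¹ * t)).det ≠ 0) (F : X → K) :
    ∃! f : X → K, ∀ x : X, ∑ g : G, a g * f (g • x) = F x := by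
  set M : Matrix G G K := Matrix.of fun s t : G => a (s⁻¹ * t) with hM
  have hu : IsUnit M.transpose := by
    rw [Matrix.isUnit_iff_isUnit_det, Matrix.det_transpose]
    exact isUnit_iff_ne_zero.mpr hdet
  have hmul : ∀ (v : G → K) (s : G), M.transpose.mulVec v s = ∑ t, a (t⁻¹ * s) * v t := by
    intro v s
    simp [Matrix.mulVec, dotProduct, hM]
  have hinj : ∀ v w : G → K,
      (∀ s, ∑ t, a (t⁻¹ * s) * v t = ∑ t, a (t⁻¹ * s) * w t) → v = w := by
    intro v w h
    apply Matrix.mulVec_injective_iff_isUnit.mpr hu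
    funext s
    rw [hmul, hmul, h]
  have hsurj : ∀ c : G → K, ∃ v : G → K, ∀ s, ∑ t, a (t⁻¹ * s) * v t = c s := by
    intro c
    obtain ⟨v, hv⟩ := Matrix.mulVec_surjective_iff_isUnit.mpr hu c
    exact ⟨v, fun s => by rw [← hmul, hv]⟩
  -- reindexing of the sum along `g = t⁻¹ * s`
  have hre : ∀ (f : X → K) (x : X) (s : G),
      ∑ t, a (t⁻¹ * s) * f (t⁻¹ • x) = ∑ g, a g * f (g • s⁻¹ • x) := by
    intro f x s
    refine Fintype.sum_equiv ((Equiv.inv G).trans (Equiv.mulRight s)) _ _ ?_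
    intro t
    simp [smul_smul]
  choose v hv using fun x : X => hsurj (fun s => F (s⁻¹ • x))
  have htrans : ∀ (x : X) (s : G), v x s = v (s⁻¹ • x) 1 := by
    intro x s
    have : (fun t => v x (s * t)) = v (s⁻¹ • x) := by
      apply hinj
      intro u
      rw [hv]
      have h := hv x (s * u)
      rw [← Equiv.sum_comp (Equiv.mulLeft s)] at h
      simpa [mul_assoc, smul_smul] using h
    simpa using congrFun this 1
  refine ⟨fun x => v x 1, ?_, ?_⟩
  · intro x
    have h := hre (fun x => v x 1) x 1
    simp only [← htrans] at h
    have h2 := hv x 1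
    rw [h] at h2
    simpa using h2
  · intro f hf
    funext x
    have : (fun t : G => f (t⁻¹ • x)) = v x := by
      apply hinj
      intro s
      rw [hre, hf, hv]
    simpa using congrFun this 1
end
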